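/- (Monotonicity of the relative capacity loss, scalar form of Corollary 1.) For a fixed real c > 0, the relative capacity loss function f(γ) = 1 − Real.log(1 + γ/(cγ + 1)) / Real.log(1 + γ) is monotone nondecreasing on (0, ∞). Consequently, under a total transmit power constraint (per-antenna SNR γ = ρ/N decreasing in the antenna number N), the relative capacity loss decreases as the antenna number increases. -/

import Mathlib

/-!
The capacities `f γ = log (1 + γ / (c * γ + 1))` and `g γ = log (1 + γ)` both vanish at `0`, so by
the monotone form of l'Hôpital's rule `f / g` is antitone as soon as `f' / g'` is. The chain rule
gives `f' γ / g' γ = (1 + γ) / ((c * γ + 1) * ((c + 1) * γ + 1))`, a product of the two antitone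
functions `1 / (c * γ + 1)` and `(1 + γ) / ((c + 1) * γ + 1)`.
-/

open Set

section MonotoneLHopital

variable {f g f' g' : ℝ → ℝ}

lemma exists_sub_div_sub_eq_hasDerivAt_div {a b : ℝ} (hab : a < b)
    (hf : ContinuousOn f (Icc a b)) (hf' : ∀ x ∈ Ioo a b, HasDerivAt f (f' x) x)
    (hg : ContinuousOn g (Icc a b)) (hg' : ∀ x ∈ Ioo a b, HasDerivAt g (g' x) x)
    (hg'_ne : ∀ x ∈ Ioo a b, g' x ≠ 0) :
    ∃ z ∈ Ioo a b, (f b - f a) / (g b - g a) = f' z / g' z := by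
  have hg_ne : g b - g a ≠ 0 := fun h ↦
    have ⟨z, hz, hz0⟩ := exists_hasDerivAt_eq_zero hab hg (sub_eq_zero.1 h).symm hg'
    hg'_ne z hz hz0
  obtain ⟨z, hz, h⟩ := exists_ratio_hasDerivAt_eq_ratio_slope f f' hab hf hf' g g' hg hg'
  refine ⟨z, hz, ?_⟩
  rw [div_eq_div_iff hg_ne (hg'_ne z hz)]
  linarith

lemma antitoneOn_sub_div_sub_of_antitoneOn_hasDerivAt_div {D : Set ℝ} (hD : Convex ℝ D) {a : ℝ}
    (ha : a ∈ D) (hf : ContinuousOn f D) (hf' : ∀ x ∈ interior D, HasDerivAt f (f' x) x)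
    (hg : ContinuousOn g D) (hg' : ∀ x ∈ interior D, HasDerivAt g (g' x) x)
    (hg'_pos : ∀ x ∈ interior D, 0 < g' x)
    (h_anti : AntitoneOn (fun x ↦ f' x / g' x) (interior D)) :
    AntitoneOn (fun x ↦ (f x - f a) / (g x - g a)) (D ∩ Ioi a) := by
  rintro x ⟨hxD, hax⟩ y ⟨hyD, hay⟩ hxy
  rcases hxy.eq_or_lt with rfl | hxy
  · exact le_rfl
  have cauchy {u v : ℝ} (hu : u ∈ D) (hv : v ∈ D) (huv : u < v) :
      ∃ z ∈ Ioo u v, z ∈ interior D ∧ (f v - f u) / (g v - g u) = f' z / g' z := by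
    have hIcc : Icc u v ⊆ D := hD.ordConnected.out hu hv
    have hIoo : Ioo u v ⊆ interior D := interior_Icc (a := u) ▸ interior_mono hIcc
    obtain ⟨z, hz, h⟩ := exists_sub_div_sub_eq_hasDerivAt_div huv (hf.mono hIcc)
      (fun t ht ↦ hf' t (hIoo ht)) (hg.mono hIcc) (fun t ht ↦ hg' t (hIoo ht))
      (fun t ht ↦ (hg'_pos t (hIoo ht)).ne')
    exact ⟨z, hz, hIoo hz, h⟩
  have hg_mono : StrictMonoOn g D := strictMonoOn_of_hasDerivWithinAt_pos hD hg
    (fun t ht ↦ (hg' t ht).hasDerivWithinAt) hg'_pos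
  have hgax : 0 < g x - g a := sub_pos.2 (hg_mono ha hxD hax)
  have hgxy : 0 < g y - g x := sub_pos.2 (hg_mono hxD hyD hxy)
  have h_ratio : (f y - f x) / (g y - g x) ≤ (f x - f a) / (g x - g a) := by
    obtain ⟨z, hz, hzD, hz_eq⟩ := cauchy ha hxD hax
    obtain ⟨w, hw, hwD, hw_eq⟩ := cauchy hxD hyD hxy
    rw [hz_eq, hw_eq]
    exact h_anti hzD hwD (hz.2.trans hw.1).le
  -- The ratio from `a` to `y` is the mediant of the ratios from `a` to `x` and from `x` to `y`.
  rw [div_le_div_iff₀ hgxy hgax] at h_ratio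
  change (f y - f a) / (g y - g a) ≤ (f x - f a) / (g x - g a)
  rw [div_le_div_iff₀ (by linarith) hgax]
  linarith

end MonotoneLHopital

/-- The equivalent SNR `γₑ = γ / (c γ + 1)` seen by a channel with SNR `γ` and CSI-difference
variance parameter `c`, as a function of `γ`. It takes the junk value `0` where `c γ = -1`. -/
noncomputable def equivalentSNR (c γ : ℝ) : ℝ := γ / (c * γ + 1)

section EquivalentSNR

variable {c γ : ℝ}

lemma one_add_equivalentSNR (h : c * γ + 1 ≠ 0) :
    1 + equivalentSNR c γ = ((c + 1) * γ + 1) / (c * γ + 1) := by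
  rw [equivalentSNR, one_add_div h]
  ring

lemma hasDerivAt_equivalentSNR (h : c * γ + 1 ≠ 0) :
    HasDerivAt (equivalentSNR c) (1 / (c * γ + 1) ^ 2) γ := by
  have h_denom : HasDerivAt (fun x ↦ c * x + 1) c γ := by
    simpa using ((hasDerivAt_id γ).const_mul c).add_const 1
  refine ((hasDerivAt_id γ).div h_denom h).congr_deriv ?_
  simp only [id]
  ring

lemma hasDerivAt_log_one_add_equivalentSNR (h : c * γ + 1 ≠ 0) (h' : (c + 1) * γ + 1 ≠ 0) :
    HasDerivAt (fun x ↦ Real.log (1 + equivalentSNR c x))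
      (1 / ((c * γ + 1) * ((c + 1) * γ + 1))) γ := by
  have h_ne : 1 + equivalentSNR c γ ≠ 0 := by
    rw [one_add_equivalentSNR h]
    exact div_ne_zero h' h
  refine (((hasDerivAt_equivalentSNR h).const_add 1).log h_ne).congr_deriv ?_
  rw [one_add_equivalentSNR h]
  field_simp

end EquivalentSNR

lemma antitoneOn_one_add_div_mul {c : ℝ} (hc : 0 ≤ c) :
    AntitoneOn (fun x ↦ (1 + x) / ((c * x + 1) * ((c + 1) * x + 1))) (Ici 0) := by
  intro x (hx : 0 ≤ x) y (hy : 0 ≤ y) hxy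
  have h_cross : (1 + y) * ((c + 1) * x + 1) ≤ (1 + x) * ((c + 1) * y + 1) := by
    linarith [mul_le_mul_of_nonneg_left hxy hc]
  change (1 + y) / _ ≤ (1 + x) / _
  rw [div_le_div_iff₀ (by positivity) (by positivity)]
  calc (1 + y) * ((c * x + 1) * ((c + 1) * x + 1))
      = (c * x + 1) * ((1 + y) * ((c + 1) * x + 1)) := by ring
    _ ≤ (c * y + 1) * ((1 + x) * ((c + 1) * y + 1)) := by gcongr
    _ = (1 + x) * ((c * y + 1) * ((c + 1) * y + 1)) := by ring

lemma antitoneOn_log_one_add_equivalentSNR_div_log_one_add {c : ℝ} (hc : 0 ≤ c) :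
    AntitoneOn (fun γ ↦ Real.log (1 + equivalentSNR c γ) / Real.log (1 + γ)) (Ioi 0) := by
  have hf' (x : ℝ) (hx : 0 ≤ x) : HasDerivAt (fun x ↦ Real.log (1 + equivalentSNR c x))
      (1 / ((c * x + 1) * ((c + 1) * x + 1))) x :=
    hasDerivAt_log_one_add_equivalentSNR (by positivity) (by positivity)
  have hg' (x : ℝ) (hx : 0 ≤ x) : HasDerivAt (fun x ↦ Real.log (1 + x)) (1 / (1 + x)) x :=
    ((hasDerivAt_id x).const_add 1).log (by simp only [id]; positivity)
  have h_anti : AntitoneOn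
      (fun x ↦ 1 / ((c * x + 1) * ((c + 1) * x + 1)) / (1 / (1 + x))) (Ici 0) := by
    simpa only [one_div, div_inv_eq_mul, inv_mul_eq_div] using antitoneOn_one_add_div_mul hc
  have hg'_pos (x : ℝ) (hx : 0 ≤ x) : 0 < 1 / (1 + x) := by positivity
  have h := antitoneOn_sub_div_sub_of_antitoneOn_hasDerivAt_div (convex_Ici 0) self_mem_Ici
    (fun x hx ↦ (hf' x hx).continuousAt.continuousWithinAt)
    (fun x hx ↦ hf' x (interior_subset hx))
    (fun x hx ↦ (hg' x hx).continuousAt.continuousWithinAt)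
    (fun x hx ↦ hg' x (interior_subset hx))
    (fun x hx ↦ hg'_pos x (interior_subset hx))
    (h_anti.mono interior_subset)
  simpa [equivalentSNR, inter_eq_right.2 Ioi_subset_Ici_self] using h

/-- Monotonicity of the relative capacity loss (scalar form of Corollary 1):
for fixed `c > 0`, `γ ↦ 1 - log (1 + γ/(cγ+1)) / log (1 + γ)` is monotone
nondecreasing on `(0, ∞)`. -/
theorem relative_capacity_loss_monotone
    (c : ℝ) (hc : 0 < c) :
    MonotoneOn
      (fun γ : ℝ => 1 - Real.log (1 + γ / (c * γ + 1)) / Real.log (1 + γ))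
      (Set.Ioi (0 : ℝ)) := by
  intro x hx y hy hxy
  exact sub_le_sub_left
    (antitoneOn_log_one_add_equivalentSNR_div_log_one_add hc.le hx hy hxy) 1
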